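/- In a Bonnet-Myers sharp graph G=(V,E) of diameter 2, every vertex has degree |V|−2 or |V|−1, and every vertex of degree |V|−2 has a unique vertex at distance 2 from it, which also has degree |V|−2. -/

import Mathlib

open scoped Classical
open Finset

noncomputable section

/-- The degree of a vertex `x` in the graph `G`. -/
def deg {V : Type*} [Fintype V] (G : SimpleGraph V) (x : V) : ℕ :=
  (Finset.univ.filter (fun y => G.Adj x y)).card

/-- The diameter of `G`: the maximum of the combinatorial distance over all pairs of vertices. -/
def diam {V : Type*} [Fintype V] (G : SimpleGraph V) : ℕ :=
  Finset.univ.sup (fun xy : V × V => G.dist xy.1 xy.2)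

/-- The probability measure `μ_x^p` of the lazy simple random walk at `x` with idleness `p`. -/
def mu {V : Type*} [Fintype V] (G : SimpleGraph V) (p : ℝ) (x : V) : V → ℝ :=
  fun z => if z = x then p else if G.Adj x z then (1 - p) / (deg G x : ℝ) else 0

/-- The Wasserstein distance `W₁(μ₁, μ₂)` with respect to the combinatorial distance of `G`:
the infimum of the total transport cost over all transport plans from `μ₁` to `μ₂`. -/
def W1 {V : Type*} [Fintype V] (G : SimpleGraph V) (μ₁ μ₂ : V → ℝ) : ℝ :=
  sInf {c : ℝ | ∃ π : V → V → ℝ,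
    (∀ x y, 0 ≤ π x y ∧ π x y ≤ 1) ∧
    (∀ x, ∑ y, π x y = μ₁ x) ∧
    (∀ y, ∑ x, π x y = μ₂ y) ∧
    c = ∑ x, ∑ y, (G.dist x y : ℝ) * π x y}

/-- The `p`-Ollivier-Ricci curvature `κ_p(x,y) = 1 - W₁(μ_x^p, μ_y^p)`. -/
def kappa {V : Type*} [Fintype V] (G : SimpleGraph V) (p : ℝ) (x y : V) : ℝ :=
  1 - W1 G (mu G p x) (mu G p y)

/-- The Lin-Lu-Yau curvature `κ_LLY(x,y) = lim_{p→1} κ_p(x,y)/(1-p)`. -/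
def kappaLLY {V : Type*} [Fintype V] (G : SimpleGraph V) (x y : V) : ℝ :=
  Filter.limUnder (nhdsWithin 1 (Set.Iio 1)) (fun p => kappa G p x y / (1 - p))

/-- `G` is Bonnet-Myers sharp if the infimum of `κ_LLY` over the edges equals `2/diam(G)`. -/
def BMSharp {V : Type*} [Fintype V] (G : SimpleGraph V) : Prop :=
  sInf {r : ℝ | ∃ x y, G.Adj x y ∧ r = kappaLLY G x y} = 2 / (diam G : ℝ)

/-- `G` is obtained from the complete graph on its vertex set by deleting a matching
(a set of pairwise disjoint edges, encoded as a symmetric irreflexive relation in which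
every vertex has at most one partner). -/
def IsMatchingDeletionOfComplete {V : Type*} (G : SimpleGraph V) : Prop :=
  ∃ M : V → V → Prop, Symmetric M ∧ (∀ x, ¬ M x x) ∧
    (∀ x y z, M x y → M x z → y = z) ∧
    (∀ x y, G.Adj x y ↔ x ≠ y ∧ ¬ M x y)

/-- The graph `G(a,b)` on `2a+b` vertices `u_1, …, u_{2a}, v_1, …, v_b` (encoded as
`Fin (2a+b)`, with `u_i` the index `i-1` and `v_j` the index `2a+j-1`), in which two distinct
vertices are adjacent unless they form a pair `{u_{2i-1}, u_{2i}}`, i.e. `G(a,b)` is the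
complete graph `K_{2a+b}` with a matching of size `a` deleted. -/
def Gab (a b : ℕ) : SimpleGraph (Fin (2*a+b)) where
  Adj x y := x ≠ y ∧ ¬((x : ℕ) < 2*a ∧ (y : ℕ) < 2*a ∧ (x : ℕ)/2 = (y : ℕ)/2)
  symm := by
    constructor
    intro x y h
    exact ⟨h.1.symm, fun hc => h.2 ⟨hc.2.1, hc.1, hc.2.2.symm⟩⟩
  loopless := by constructor; intro x h; exact h.1 rfl

/-- The antitree `AT(a_1, …, a_N)` on the disjoint union of sets `V_1, …, V_N` with
`|V_k| = a_k` (0-indexed here: `V_k` is `Fin (a k)` for `k : Fin N`): two distinct vertices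
are adjacent iff they lie in the same set or in consecutive sets. -/
def antitree (N : ℕ) (a : Fin N → ℕ) : SimpleGraph (Σ k : Fin N, Fin (a k)) where
  Adj x y := x ≠ y ∧
    ((x.1 : ℕ) = (y.1 : ℕ) ∨ (x.1 : ℕ) + 1 = (y.1 : ℕ) ∨ (y.1 : ℕ) + 1 = (x.1 : ℕ))
  symm := by
    constructor
    intro x y h
    refine ⟨h.1.symm, ?_⟩
    rcases h.2 with h2 | h2 | h2
    · exact Or.inl h2.symm
    · exact Or.inr (Or.inr h2)
    · exact Or.inr (Or.inl h2)
  loopless := by constructor; intro x h; exact h.1 rfl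

def lap {V : Type*} [Fintype V] (G : SimpleGraph V) (f : V → ℝ) (x : V) : ℝ :=
  (∑ z ∈ Finset.univ.filter (fun y => G.Adj x y), (f z - f x)) / (deg G x : ℝ)

lemma deg_pos_of_adj {V : Type*} [Fintype V] (G : SimpleGraph V) {x y : V} (h : G.Adj x y) :
    0 < (deg G x : ℝ) := by
  have : 0 < deg G x := Finset.card_pos.mpr ⟨y, by simp [h]⟩
  exact_mod_cast this

lemma mu_eq {V : Type*} [Fintype V] (G : SimpleGraph V) (p : ℝ) (x z : V) :
    mu G p x z = (if z = x then p else 0) + (if G.Adj x z then (1 - p) / (deg G x : ℝ) else 0) := by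
  unfold mu
  by_cases h : z = x
  · subst h; simp
  · simp [h]

lemma mu_sum {V : Type*} [Fintype V] (G : SimpleGraph V) (p : ℝ) (x : V)
    (hd : 0 < (deg G x : ℝ)) (f : V → ℝ) :
    ∑ z, mu G p x z * f z = f x + (1 - p) * lap G f x := by
  simp only [mu_eq, add_mul, Finset.sum_add_distrib, ite_mul, zero_mul]
  rw [Finset.sum_ite_eq' Finset.univ x, ← Finset.sum_filter]
  simp only [lap, Finset.sum_sub_distrib, Finset.sum_const, nsmul_eq_mul, ← Finset.mul_sum]
  change _ = f x + (1 - p) * ((_ - (deg G x : ℝ) * f x) / _)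
  simp only [Finset.mem_univ, if_true]
  field_simp
  ring

lemma mu_nonneg {V : Type*} [Fintype V] (G : SimpleGraph V) {p : ℝ} (h0 : 0 ≤ p) (h1 : p ≤ 1)
    (x z : V) : 0 ≤ mu G p x z := by
  unfold mu
  have : 0 ≤ 1 - p := by linarith
  split_ifs <;> positivity

lemma mu_total {V : Type*} [Fintype V] (G : SimpleGraph V) (p : ℝ) (x : V)
    (hd : 0 < (deg G x : ℝ)) : ∑ z, mu G p x z = 1 := by
  have := mu_sum G p x hd (fun _ => 1)
  simpa [lap] using this

lemma mu_le_one {V : Type*} [Fintype V] (G : SimpleGraph V) {p : ℝ} (h0 : 0 ≤ p) (h1 : p ≤ 1)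
    (x z : V) (hd : 0 < (deg G x : ℝ)) : mu G p x z ≤ 1 := by
  rw [← mu_total G p x hd]
  exact Finset.single_le_sum (f := mu G p x) (fun i _ => mu_nonneg G h0 h1 x i) (Finset.mem_univ z)

def costs {V : Type*} [Fintype V] (G : SimpleGraph V) (μ₁ μ₂ : V → ℝ) : Set ℝ :=
  {c : ℝ | ∃ π : V → V → ℝ,
    (∀ x y, 0 ≤ π x y ∧ π x y ≤ 1) ∧
    (∀ x, ∑ y, π x y = μ₁ x) ∧
    (∀ y, ∑ x, π x y = μ₂ y) ∧
    c = ∑ x, ∑ y, (G.dist x y : ℝ) * π x y}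

lemma costs_nonempty {V : Type*} [Fintype V] (G : SimpleGraph V) {p : ℝ} (h0 : 0 ≤ p) (h1 : p ≤ 1)
    {x y : V} (h : G.Adj x y) : (costs G (mu G p x) (mu G p y)).Nonempty := by
  have dx := deg_pos_of_adj G h
  have dy := deg_pos_of_adj G h.symm
  refine ⟨_, fun a b => mu G p x a * mu G p y b, ?_, ?_, ?_, rfl⟩
  · intro a b
    exact ⟨mul_nonneg (mu_nonneg G h0 h1 _ _) (mu_nonneg G h0 h1 _ _),
      mul_le_one₀ (mu_le_one G h0 h1 _ _ dx) (mu_nonneg G h0 h1 _ _) (mu_le_one G h0 h1 _ _ dy)⟩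
  · intro a
    rw [← Finset.mul_sum, mu_total G p y dy, mul_one]
  · intro b
    rw [← Finset.sum_mul, mu_total G p x dx, one_mul]

lemma costs_bdd {V : Type*} [Fintype V] (G : SimpleGraph V) (m n : V → ℝ) :
    BddBelow (costs G m n) := by
  refine ⟨0, ?_⟩
  rintro c ⟨π, h, -, -, rfl⟩
  exact Finset.sum_nonneg fun a _ => Finset.sum_nonneg fun b _ =>
    mul_nonneg (Nat.cast_nonneg _) (h a b).1

lemma cost_ge {V : Type*} [Fintype V] (G : SimpleGraph V) (m n : V → ℝ) (f : V → ℝ)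
    (hf : ∀ a b, f b - f a ≤ G.dist a b) {c : ℝ} (hc : c ∈ costs G m n) :
    ∑ z, n z * f z - ∑ z, m z * f z ≤ c := by
  obtain ⟨π, h, h1, h2, rfl⟩ := hc
  have e1 : ∑ z, n z * f z = ∑ a, ∑ b, π a b * f b := by
    rw [Finset.sum_comm]
    refine Finset.sum_congr rfl fun b _ => ?_
    rw [← h2, Finset.sum_mul]
  have e2 : ∑ z, m z * f z = ∑ a, ∑ b, π a b * f a := by
    refine Finset.sum_congr rfl fun b _ => ?_
    rw [← h1, Finset.sum_mul]
  rw [e1, e2, ← Finset.sum_sub_distrib]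
  refine Finset.sum_le_sum fun a _ => ?_
  rw [← Finset.sum_sub_distrib]
  refine Finset.sum_le_sum fun b _ => ?_
  have := mul_le_mul_of_nonneg_right (hf a b) (h a b).1
  linarith

lemma kappa_le {V : Type*} [Fintype V] (G : SimpleGraph V) {p : ℝ} (h0 : 0 ≤ p) (h1 : p < 1)
    {x y : V} (h : G.Adj x y) (f : V → ℝ) (hf : ∀ a b, f b - f a ≤ G.dist a b)
    (hxy : f y - f x = 1) : kappa G p x y / (1 - p) ≤ lap G f x - lap G f y := by
  have hp : 0 < 1 - p := by linarith
  rw [div_le_iff₀ hp]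
  have : ∑ z, mu G p y z * f z - ∑ z, mu G p x z * f z ≤ W1 G (mu G p x) (mu G p y) :=
    le_csInf (costs_nonempty G h0 h1.le h) fun c hc => cost_ge G _ _ f hf hc
  rw [mu_sum G p x (deg_pos_of_adj G h), mu_sum G p y (deg_pos_of_adj G h.symm)] at this
  unfold kappa
  linarith

lemma mu_conv {V : Type*} [Fintype V] (G : SimpleGraph V) {p q t : ℝ}
    (ht : t * (1 - p) = 1 - q) (x z : V) :
    mu G q x z = t * mu G p x z + (1 - t) * (if z = x then 1 else 0) := by
  have hq : q = 1 - t * (1 - p) := by linarith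
  subst hq
  rw [mu_eq, mu_eq]
  split_ifs <;> ring

lemma W1_conv {V : Type*} [Fintype V] (G : SimpleGraph V) {p q t : ℝ} (h0 : 0 ≤ p) (h1 : p ≤ 1)
    (ht0 : 0 < t) (ht1 : t ≤ 1) (ht : t * (1 - p) = 1 - q) {x y : V} (h : G.Adj x y) :
    W1 G (mu G q x) (mu G q y) ≤ t * W1 G (mu G p x) (mu G p y) + (1 - t) := by
  have key : (W1 G (mu G q x) (mu G q y) - (1 - t)) / t ≤ W1 G (mu G p x) (mu G p y) := by
    refine le_csInf (costs_nonempty G h0 h1 h) fun c hc => ?_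
    rw [div_le_iff₀ ht0]
    obtain ⟨π, hπ, hπ1, hπ2, rfl⟩ := hc
    have hs : 0 ≤ 1 - t := by linarith
    have hmem : t * (∑ x, ∑ y, (G.dist x y : ℝ) * π x y) + (1 - t) ∈
        costs G (mu G q x) (mu G q y) := by
      refine ⟨fun a b => t * π a b + (1 - t) * (if a = x then (if b = y then 1 else 0) else 0),
        ?_, ?_, ?_, ?_⟩
      · intro a b
        have := hπ a b
        constructor
        · have := mul_nonneg ht0.le this.1
          beta_reduce
          split_ifs <;> nlinarith
        · have := mul_le_mul_of_nonneg_left this.2 ht0.le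
          beta_reduce
          split_ifs <;> nlinarith
      · intro a
        rw [Finset.sum_add_distrib, ← Finset.mul_sum, ← Finset.mul_sum, hπ1, mu_conv G ht]
        split_ifs <;> simp
      · intro b
        rw [Finset.sum_add_distrib, ← Finset.mul_sum, ← Finset.mul_sum, hπ2, mu_conv G ht]
        simp
      · have hd : (G.dist x y : ℝ) = 1 := by
          exact_mod_cast SimpleGraph.dist_eq_one_iff_adj.mpr h
        simp only [mul_add, Finset.sum_add_distrib]
        congr 1
        · rw [Finset.mul_sum]
          refine Finset.sum_congr rfl fun a _ => ?_
          rw [Finset.mul_sum]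
          refine Finset.sum_congr rfl fun b _ => by ring
        · simp [hd]
    have := csInf_le (costs_bdd G _ _) hmem
    change W1 G (mu G q x) (mu G q y) ≤ _ at this
    linarith
  rw [div_le_iff₀ ht0] at key
  linarith

lemma kappa_mono {V : Type*} [Fintype V] (G : SimpleGraph V) {x y : V} (h : G.Adj x y) :
    MonotoneOn (fun p => kappa G p x y / (1 - p)) (Set.Ioo (0:ℝ) 1) := by
  intro p hp q hq hpq
  have h1 : 0 < 1 - p := by linarith [hp.2]
  have h2 : 0 < 1 - q := by linarith [hq.2]
  have ht : (1 - q) / (1 - p) * (1 - p) = 1 - q := by field_simp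
  have := W1_conv G hp.1.le hp.2.le (div_pos h2 h1) ((div_le_one h1).mpr (by linarith)) ht h
  change kappa G p x y / (1 - p) ≤ kappa G q x y / (1 - q)
  rw [le_div_iff₀ h2]
  unfold kappa
  have e : (1 - W1 G (mu G p x) (mu G p y)) / (1 - p) * (1 - q)
    = (1 - q) / (1 - p) - (1 - q) / (1 - p) * W1 G (mu G p x) (mu G p y) := by ring
  rw [e]
  linarith

lemma dist_lip {V : Type*} (G : SimpleGraph V) (hconn : G.Connected) (v a b : V) :
    (G.dist v b : ℝ) - G.dist v a ≤ G.dist a b := by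
  have := hconn.dist_triangle (u := v) (v := a) (w := b)
  have : (G.dist v b : ℝ) ≤ G.dist v a + G.dist a b := by exact_mod_cast this
  linarith

lemma kappaLLY_le {V : Type*} [Fintype V] (G : SimpleGraph V)
    {x y : V} (h : G.Adj x y) (f : V → ℝ) (hf : ∀ a b, f b - f a ≤ G.dist a b)
    (hxy : f y - f x = 1) : kappaLLY G x y ≤ lap G f x - lap G f y := by
  have hb : ∀ p ∈ Set.Ioo (0:ℝ) 1, kappa G p x y / (1 - p) ≤ lap G f x - lap G f y :=
    fun p hp => kappa_le G hp.1.le hp.2 h f hf hxy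
  have hT := (kappa_mono G h).tendsto_nhdsWithin_Ioo_left (by simp) (by
    refine ⟨lap G f x - lap G f y, ?_⟩
    rintro _ ⟨p, hp, rfl⟩
    exact hb p hp)
  unfold kappaLLY
  rw [hT.limUnder_eq]
  refine csSup_le (by simp) ?_
  rintro _ ⟨p, hp, rfl⟩
  exact hb p hp

lemma one_le_lap {V : Type*} [Fintype V] (G : SimpleGraph V) (hconn : G.Connected)
    (hdiam : diam G = 2) (hBM : BMSharp G) (v : V) {x y : V} (h : G.Adj x y)
    (hxy : G.dist v y = G.dist v x + 1) :
    1 ≤ lap G (fun a => (G.dist v a : ℝ)) x - lap G (fun a => (G.dist v a : ℝ)) y := by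
  refine le_trans ?_ (kappaLLY_le G h _ (dist_lip G hconn v) (by rw [hxy]; push_cast; ring))
  unfold BMSharp at hBM
  have e : (1:ℝ) = 2 / (diam G : ℝ) := by rw [hdiam]; norm_num
  rw [e, ← hBM]
  refine csInf_le (Set.Finite.bddBelow ?_) ⟨x, y, h, rfl⟩
  refine (Set.finite_range (fun z : V × V => kappaLLY G z.1 z.2)).subset ?_
  rintro r ⟨a, b, -, rfl⟩
  exact ⟨(a, b), rfl⟩

lemma dist_le_two {V : Type*} [Fintype V] (G : SimpleGraph V) (hdiam : diam G = 2) (x y : V) :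
    G.dist x y ≤ 2 := by
  rw [← hdiam]
  exact Finset.le_sup (f := fun xy : V × V => G.dist xy.1 xy.2) (Finset.mem_univ (x, y))

lemma lap_self {V : Type*} [Fintype V] (G : SimpleGraph V) {x y : V} (h : G.Adj x y) :
    lap G (fun a => (G.dist x a : ℝ)) x = 1 := by
  unfold lap
  rw [div_eq_one_iff_eq (deg_pos_of_adj G h).ne']
  rw [Finset.sum_congr rfl (g := fun _ => (1:ℝ))]
  · simp [deg]
  · intro z hz
    have : G.dist x z = 1 := SimpleGraph.dist_eq_one_iff_adj.mpr (by simpa using hz)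
    simp [this]

lemma lap_nbr {V : Type*} [Fintype V] (G : SimpleGraph V) (hconn : G.Connected)
    (hdiam : diam G = 2) (hBM : BMSharp G) {x y : V} (h : G.Adj x y) :
    lap G (fun a => (G.dist x a : ℝ)) y ≤ 0 := by
  have := one_le_lap G hconn hdiam hBM x h (by
    rw [SimpleGraph.dist_self, SimpleGraph.dist_eq_one_iff_adj.mpr h])
  rw [lap_self G h] at this
  linarith

lemma unique_of_nbr {V : Type*} [Fintype V] (G : SimpleGraph V) (hconn : G.Connected)
    (hdiam : diam G = 2) (hBM : BMSharp G) {x y z w : V} (h : G.Adj x y)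
    (hz : G.Adj y z) (hw : G.Adj y w) (hxz : G.dist x z = 2) (hxw : G.dist x w = 2) : z = w := by
  by_contra hne
  have hl := lap_nbr G hconn hdiam hBM h
  unfold lap at hl
  have hd := deg_pos_of_adj G hz
  rw [div_le_iff₀ hd, zero_mul] at hl
  have hy : G.dist x y = 1 := SimpleGraph.dist_eq_one_iff_adj.mpr h
  have hle : ∑ a ∈ Finset.univ.filter (fun a => G.Adj y a),
      ((if a = z then (1:ℝ) else 0) + (if a = w then 1 else 0) - (if a = x then 1 else 0)) ≤
      ∑ a ∈ Finset.univ.filter (fun a => G.Adj y a), ((G.dist x a : ℝ) - G.dist x y) := by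
    refine Finset.sum_le_sum fun a _ => ?_
    have hx0 : G.dist x x = 0 := SimpleGraph.dist_self
    rw [hy]
    by_cases haz : a = z
    · subst haz
      have : a ≠ x := by rintro rfl; omega
      simp [hne, this, hxz]; norm_num
    by_cases haw : a = w
    · subst haw
      have : a ≠ x := by rintro rfl; omega
      simp [haz, this, hxw]; norm_num
    by_cases hax : a = x
    · subst hax
      simp [haz, haw]
    · have : 0 < G.dist x a := hconn.pos_dist_of_ne (Ne.symm hax)
      have : (1:ℝ) ≤ G.dist x a := by exact_mod_cast this
      simp [haz, haw, hax, this]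
  have hs : ∑ a ∈ Finset.univ.filter (fun a => G.Adj y a),
      ((if a = z then (1:ℝ) else 0) + (if a = w then 1 else 0) - (if a = x then 1 else 0)) = 1 := by
    simp [Finset.sum_add_distrib, Finset.sum_sub_distrib, hz, hw, h.symm]
  simp only at hl
  linarith

/-- Neighbours of a vertex at distance two from `x` are neighbours of `x`. -/
lemma nbr_of_dist_two {V : Type*} [Fintype V] (G : SimpleGraph V) (hconn : G.Connected)
    (hdiam : diam G = 2) (hBM : BMSharp G) {x z w : V} (hxz : G.dist x z = 2)
    (hw : G.Adj z w) : G.dist x w = 1 := by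
  obtain ⟨y, hxy, hyz⟩ : ∃ y, G.Adj x y ∧ G.Adj y z := by
    obtain ⟨p, hp⟩ := hconn.exists_walk_length_eq_dist x z
    rw [hxz] at hp
    match p, hp with
    | .cons h1 (.cons h2 .nil), _ => exact ⟨_, h1, h2⟩
  have hl := lap_nbr G hconn hdiam hBM hxy
  have h1 := one_le_lap G hconn hdiam hBM x hyz (by
    rw [hxz, SimpleGraph.dist_eq_one_iff_adj.mpr hxy])
  have h2 : lap G (fun a => (G.dist x a : ℝ)) z ≤ -1 := by linarith
  unfold lap at h2
  rw [div_le_iff₀ (deg_pos_of_adj G hw)] at h2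
  have hge : ∀ a, G.Adj z a → 1 ≤ G.dist x a := fun a ha => by
    have := hconn.dist_triangle (u := x) (v := a) (w := z)
    rw [SimpleGraph.dist_eq_one_iff_adj.mpr ha.symm] at this
    omega
  by_contra hne
  have hw2 : G.dist x w = 2 := by
    have := dist_le_two G hdiam x w
    have := hge w hw
    omega
  have hlt : ∑ a ∈ Finset.univ.filter (fun a => G.Adj z a), (-1 : ℝ) <
      ∑ a ∈ Finset.univ.filter (fun a => G.Adj z a), ((G.dist x a : ℝ) - G.dist x z) := by
    refine Finset.sum_lt_sum (fun a ha => ?_) ⟨w, by simp [hw], ?_⟩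
    · have : (1:ℝ) ≤ G.dist x a := by exact_mod_cast hge a (by simpa using ha)
      rw [hxz]; push_cast; linarith
    · rw [hxz, hw2]; norm_num
  rw [Finset.sum_const, nsmul_eq_mul] at hlt
  change (deg G z : ℝ) * -1 < _ at hlt
  simp only at h2
  linarith

lemma dist_two_unique {V : Type*} [Fintype V] (G : SimpleGraph V) (hconn : G.Connected)
    (hdiam : diam G = 2) (hBM : BMSharp G) {x z w : V} (hxz : G.dist x z = 2)
    (hxw : G.dist x w = 2) : z = w := by
  obtain ⟨y, hzy⟩ : ∃ y, G.Adj z y := by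
    obtain ⟨p, hp⟩ := hconn.exists_walk_length_eq_dist z x
    rw [SimpleGraph.dist_comm, hxz] at hp
    match p, hp with
    | .cons h1 _, _ => exact ⟨_, h1⟩
  have hxy : G.Adj x y :=
    SimpleGraph.dist_eq_one_iff_adj.mp (nbr_of_dist_two G hconn hdiam hBM hxz hzy)
  have hwy : G.Adj w y := SimpleGraph.dist_eq_one_iff_adj.mp
    (nbr_of_dist_two G hconn hdiam hBM (SimpleGraph.dist_comm.trans hxw) hxy)
  exact unique_of_nbr G hconn hdiam hBM hxy hzy.symm hwy.symm hxz hxw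

lemma deg_add {V : Type*} [Fintype V] (G : SimpleGraph V) (hconn : G.Connected)
    (hdiam : diam G = 2) (x : V) :
    deg G x + (Finset.univ.filter (fun z => G.dist x z = 2)).card + 1 = Fintype.card V := by
  have e : (Finset.univ : Finset V) = (Finset.univ.filter (fun z => G.Adj x z) ∪
      Finset.univ.filter (fun z => G.dist x z = 2)) ∪ {x} := by
    ext z
    simp only [Finset.mem_univ, Finset.mem_union, Finset.mem_filter, Finset.mem_singleton,
      true_and, true_iff]
    by_cases hzx : z = x
    · exact Or.inr hzx
    · have h1 := hconn.pos_dist_of_ne (Ne.symm hzx)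
      have h2 := dist_le_two G hdiam x z
      rw [← SimpleGraph.dist_eq_one_iff_adj]
      omega
  have hc := congrArg Finset.card e
  rw [Finset.card_union_of_disjoint, Finset.card_union_of_disjoint, Finset.card_univ,
    Finset.card_singleton] at hc
  · exact hc.symm
  · rw [Finset.disjoint_left]
    intro a ha hb
    simp only [Finset.mem_filter, Finset.mem_univ, true_and] at ha hb
    rw [← SimpleGraph.dist_eq_one_iff_adj] at ha
    omega
  · simp

/-- In a Bonnet-Myers sharp graph of diameter 2, every vertex has degree
`|V| - 2` or `|V| - 1`, and every vertex of degree `|V| - 2` has a unique vertex at distance 2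
from it, which also has degree `|V| - 2`. -/
theorem stmt10 {V : Type*} [Fintype V] (G : SimpleGraph V) (hconn : G.Connected)
    (hdiam : diam G = 2) (hBM : BMSharp G) :
    (∀ x : V, deg G x = Fintype.card V - 2 ∨ deg G x = Fintype.card V - 1) ∧
    (∀ x : V, deg G x = Fintype.card V - 2 →
      (∃! z : V, G.dist x z = 2) ∧
      (∀ z : V, G.dist x z = 2 → deg G z = Fintype.card V - 2)) := by
  have hle : ∀ x, (Finset.univ.filter (fun z => G.dist x z = 2)).card ≤ 1 := by
    intro x
    rw [Finset.card_le_one]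
    intro a ha b hb
    simp only [Finset.mem_filter, Finset.mem_univ, true_and] at ha hb
    exact dist_two_unique G hconn hdiam hBM ha hb
  have hadd := deg_add G hconn hdiam
  have hdz : ∀ x z, G.dist x z = 2 → deg G x = Fintype.card V - 2 := by
    intro x z hz
    have h0 : 0 < (Finset.univ.filter (fun z => G.dist x z = 2)).card :=
      Finset.card_pos.mpr ⟨z, by simp [hz]⟩
    have := hle x
    have := hadd x
    omega
  have hcard : 2 ≤ Fintype.card V := by
    by_contra hc
    have : Subsingleton V := Fintype.card_le_one_iff_subsingleton.mp (by omega)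
    have : diam G ≤ 0 := by
      unfold diam
      refine Finset.sup_le fun xy _ => ?_
      rw [Subsingleton.elim xy.1 xy.2, SimpleGraph.dist_self]
    omega
  refine ⟨fun x => ?_, fun x hx => ⟨?_, fun z hz => ?_⟩⟩
  · have := hle x
    have := hadd x
    omega
  · have := hadd x
    obtain ⟨z, hz⟩ := Finset.card_pos.mp
      (show 0 < (Finset.univ.filter (fun z => G.dist x z = 2)).card by omega)
    have hz' : G.dist x z = 2 := by simpa using hz
    exact ⟨z, hz', fun w hw => dist_two_unique G hconn hdiam hBM hw hz'⟩
  · exact hdz z x (SimpleGraph.dist_comm.trans hz)
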